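/- arXiv:1601.06501 — 2 statements merged into one kernel-verified Lean document; each statement's English description precedes it below -/
import Mathlib

section
/- Let b be a prime and s, α ∈ ℕ with α ≥ 2. If k, l ∈ ℕ₀^s satisfy κ(k ⊖ l) > 2αs, then K̂_{α,s}(k, l) = 0. -/
/-!
Cutting `[0,1)` into `b` intervals of length `1/b` strips the lowest digit off a Walsh function at
the price of a `b`-th root of unity. On a polynomial the resulting pieces differ only in lower
degrees, so, inductively, a Walsh coefficient `k` of a polynomial of degree less than `κ(k)`
vanishes by orthogonality of characters.

For a polynomial in `|x - y|` the same dissection leaves `b²` squares. On an off-diagonal square the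
function is a polynomial in `x` and `y`, of too small a degree to contribute. The `b` diagonal
squares carry the same rescaled function, so their weights add up to a character sum, which vanishes
unless the lowest digits of `k` and `l` agree; in that case `κ(k ⊖ l)` does not drop when these
digits are removed, and the induction continues. This handles the term `B_{2α}(|x - y|)` of the
kernel, whereas the products `B_r(x) B_r(y)` only need the bound `κ(k ⊖ l) ≤ κ(k) + κ(l)`. In
dimension `s` the coefficient is a product, and by the pigeonhole principle one of its factors has
`κ(k_j ⊖ l_j) > 2α`.
-/

open scoped BigOperators

/-- The `i`-th digit (starting from `i = 0`) of the `b`-adic expansion of `k`. -/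
def bdigit (b k i : ℕ) : ℕ := k / b ^ i % b

/-- The set of indices of nonzero `b`-adic digits of `k`. -/
def bsupp (b k : ℕ) : Finset ℕ := (Finset.range (k + 1)).filter fun i => bdigit b k i ≠ 0

/-- The Hamming metric `κ(k)`: the number of nonzero `b`-adic digits of `k`. -/
def hamming (b k : ℕ) : ℕ := (bsupp b k).card

/-- The Dick metric `μ_α(k)`: the sum of the `min(v, α)` largest exponents-plus-one
`a_1 > a_2 > ⋯` of the nonzero `b`-adic digits of `k`. -/
def dick (b α k : ℕ) : ℕ := ((((bsupp b k).sort (· ≤ ·)).reverse.take α).map (· + 1)).sum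

/-- Digitwise addition `k ⊕ l` modulo `b` of the `b`-adic digits. -/
def dadd (b k l : ℕ) : ℕ :=
  ∑ i ∈ Finset.range (k + l + 1), (bdigit b k i + bdigit b l i) % b * b ^ i

/-- Digitwise subtraction `k ⊖ l` modulo `b` of the `b`-adic digits. -/
def dsub (b k l : ℕ) : ℕ :=
  ∑ i ∈ Finset.range (k + l + 1), (bdigit b k i + (b - bdigit b l i)) % b * b ^ i

/-- Hamming metric of a vector: sum over coordinates. -/
def hammingVec (b : ℕ) {s : ℕ} (k : Fin s → ℕ) : ℕ := ∑ j, hamming b (k j)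

/-- Dick metric of a vector: sum over coordinates. -/
def dickVec (b α : ℕ) {s : ℕ} (k : Fin s → ℕ) : ℕ := ∑ j, dick b α (k j)

open MeasureTheory

/-- The `i`-th (for `i ≥ 1`) `b`-adic digit `ξ_i` of a real number `x ∈ [0,1)`, using the
expansion in which infinitely many digits differ from `b - 1`. -/
noncomputable def rdigit (b : ℕ) (x : ℝ) (i : ℕ) : ℤ := ⌊x * (b : ℝ) ^ i⌋ % b

/-- The `k`-th `b`-adic Walsh function, `wal_k(x) = ω_b^{κ_0 ξ_1 + κ_1 ξ_2 + ⋯}` where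
`ω_b = exp(2π√-1/b)`, `κ` are the `b`-adic digits of `k` and `ξ` those of `x`. -/
noncomputable def walsh (b k : ℕ) (x : ℝ) : ℂ :=
  Complex.exp (2 * (Real.pi : ℂ) * Complex.I / (b : ℂ) *
    ∑ a ∈ Finset.range (k + 1), (bdigit b k a : ℂ) * (rdigit b x (a + 1) : ℂ))

/-- The `k`-th `b`-adic Walsh function on `[0,1)^s`, `wal_k(x) = ∏_j wal_{k_j}(x_j)`. -/
noncomputable def walshVec (b : ℕ) {s : ℕ} (k : Fin s → ℕ) (x : Fin s → ℝ) : ℂ :=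
  ∏ j, walsh b (k j) (x j)

/-- The Bernoulli polynomial `B_r` evaluated at a real number. -/
noncomputable def bernoulliPoly (r : ℕ) (x : ℝ) : ℝ := Polynomial.aeval x (Polynomial.bernoulli r)

/-- The reproducing kernel `K_α` of the Sobolev space `H_α`:
`K_α(x,y) = ∑_{r=0}^{α} B_r(x)B_r(y)/(r!)² + (-1)^{α+1} B_{2α}(|x-y|)/(2α)!`. -/
noncomputable def Kker (α : ℕ) (x y : ℝ) : ℝ :=
  ∑ r ∈ Finset.range (α + 1), bernoulliPoly r x * bernoulliPoly r y / ((r.factorial : ℝ)) ^ 2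
    + (-1 : ℝ) ^ (α + 1) * bernoulliPoly (2 * α) |x - y| / ((2 * α).factorial : ℝ)

/-- The `(k,l)`-th Walsh coefficient of the kernel `K_α`. -/
noncomputable def Khat (b α : ℕ) (k l : ℕ) : ℂ :=
  ∫ x in Set.Ico (0 : ℝ) 1, ∫ y in Set.Ico (0 : ℝ) 1,
    (Kker α x y : ℂ) * (starRingEnd ℂ) (walsh b k x) * walsh b l y

/-- The `(k,l)`-th Walsh coefficient of the `s`-variate kernel
`K_{α,s}(x,y) = ∏_j K_α(x_j, y_j)`. -/
noncomputable def KhatS (b α s : ℕ) (k l : Fin s → ℕ) : ℂ :=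
  ∫ x in Set.univ.pi fun _ : Fin s => Set.Ico (0 : ℝ) 1,
    ∫ y in Set.univ.pi fun _ : Fin s => Set.Ico (0 : ℝ) 1,
      ((∏ j, Kker α (x j) (y j) : ℝ) : ℂ) * (starRingEnd ℂ) (walshVec b k x) * walshVec b l y

/-- The `k`-th Walsh coefficient `b̂_r(k)` of the normalized Bernoulli polynomial `B_r/r!`. -/
noncomputable def bhat (b r k : ℕ) : ℂ :=
  ∫ x in Set.Ico (0 : ℝ) 1,
    ((bernoulliPoly r x / (r.factorial : ℝ) : ℝ) : ℂ) * (starRingEnd ℂ) (walsh b k x)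

/-- The `(k,l)`-th Walsh coefficient `b̂_{r,per}(k,l)` of `(x,y) ↦ B̃_r(x-y)/r!`, where
`B̃_r` is the 1-periodic extension of the Bernoulli polynomial `B_r` from `[0,1)` to `ℝ`. -/
noncomputable def bhatPer (b r : ℕ) (k l : ℕ) : ℂ :=
  ∫ x in Set.Ico (0 : ℝ) 1, ∫ y in Set.Ico (0 : ℝ) 1,
    ((bernoulliPoly r (Int.fract (x - y)) / (r.factorial : ℝ) : ℝ) : ℂ) *
      (starRingEnd ℂ) (walsh b k x) * walsh b l y

section Digits

variable {b : ℕ}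

lemma bdigit_zero (b k : ℕ) : bdigit b k 0 = k % b := by simp [bdigit]

lemma bdigit_succ (b k i : ℕ) : bdigit b k (i + 1) = bdigit b (k / b) i := by
  simp only [bdigit, pow_succ', Nat.div_div_eq_div_mul]

lemma bdigit_eq_zero_of_le (hb : 1 < b) {k i : ℕ} (h : k ≤ i) : bdigit b k i = 0 := by
  rw [bdigit, Nat.div_eq_of_lt (h.trans_lt (Nat.lt_pow_self hb)), Nat.zero_mod]

lemma digit_induction (hb : 1 < b) {P : ℕ → ℕ → Prop} (zero : P 0 0)
    (step : ∀ k l, P (k / b) (l / b) → P k l) (k l : ℕ) : P k l := by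
  induction hn : k + l using Nat.strong_induction_on generalizing k l with
  | _ n ih =>
    rcases n.eq_zero_or_pos with rfl | hpos
    · obtain ⟨rfl, rfl⟩ := Nat.add_eq_zero_iff.mp hn
      exact zero
    · refine step k l (ih _ ?_ _ _ rfl)
      have hk := Nat.div_le_self k b
      have hl := Nat.div_le_self l b
      rcases k.eq_zero_or_pos with hk0 | hk0
      · have := Nat.div_lt_self (show 0 < l by omega) hb
        omega
      · have := Nat.div_lt_self hk0 hb
        omega

lemma hamming_eq_sum_range (hb : 1 < b) {k N : ℕ} (h : k ≤ N) :
    hamming b k = ∑ i ∈ Finset.range N, if bdigit b k i = 0 then 0 else 1 := by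
  rw [hamming, bsupp, Finset.card_filter]
  simp only [ne_eq, ite_not]
  have vanish : ∀ i, k ≤ i → (if bdigit b k i = 0 then 0 else 1) = 0 := fun i hi =>
    if_pos (bdigit_eq_zero_of_le hb hi)
  rw [Finset.eventually_constant_sum vanish k.le_succ, Finset.eventually_constant_sum vanish h]

lemma hamming_eq_hamming_div_add (hb : 1 < b) (k : ℕ) :
    hamming b k = hamming b (k / b) + if k % b = 0 then 0 else 1 := by
  rw [hamming_eq_sum_range hb k.le_succ, hamming_eq_sum_range hb (Nat.div_le_self k b),
    Finset.sum_range_succ', bdigit_zero]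
  simp only [bdigit_succ]

lemma dsub_eq_sum_range (hb : 1 < b) {k l N : ℕ} (h : k + l ≤ N) :
    dsub b k l =
      ∑ i ∈ Finset.range N, (bdigit b k i + (b - bdigit b l i)) % b * b ^ i := by
  have vanish : ∀ i, k + l ≤ i → (bdigit b k i + (b - bdigit b l i)) % b * b ^ i = 0 := by
    intro i hi
    rw [bdigit_eq_zero_of_le hb (by omega), bdigit_eq_zero_of_le hb (by omega)]
    simp
  rw [dsub, Finset.eventually_constant_sum vanish (k + l).le_succ,
    Finset.eventually_constant_sum vanish h]

lemma dsub_eq_mod_add_mul_dsub_div (hb : 1 < b) (k l : ℕ) :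
    dsub b k l = (k % b + (b - l % b)) % b + b * dsub b (k / b) (l / b) := by
  rw [dsub, dsub_eq_sum_range hb (add_le_add (Nat.div_le_self k b) (Nat.div_le_self l b)),
    Finset.sum_range_succ', Finset.mul_sum, add_comm]
  simp only [bdigit_zero, bdigit_succ, pow_zero, mul_one, pow_succ']
  congr 1
  exact Finset.sum_congr rfl fun i _ => by ring

lemma digit_sub_mod_eq_zero_iff {u v : ℕ} (hu : u < b) (hv : v < b) :
    (u + (b - v)) % b = 0 ↔ u = v := by
  rcases lt_or_ge u v with h | h
  · rw [Nat.mod_eq_of_lt (by omega)]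
    omega
  · rw [show u + (b - v) = u - v + b by omega, Nat.add_mod_right, Nat.mod_eq_of_lt (by omega)]
    omega

lemma hamming_dsub_eq_hamming_dsub_div_add (hb : 1 < b) (k l : ℕ) :
    hamming b (dsub b k l) =
      hamming b (dsub b (k / b) (l / b)) + if k % b = l % b then 0 else 1 := by
  have hpos : 0 < b := by omega
  have hmod : (k % b + (b - l % b)) % b < b := Nat.mod_lt _ hpos
  rw [hamming_eq_hamming_div_add hb, dsub_eq_mod_add_mul_dsub_div hb k l,
    Nat.add_mul_div_left _ _ hpos, Nat.div_eq_of_lt hmod, zero_add, Nat.add_mul_mod_self_left,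
    Nat.mod_mod]
  simp only [digit_sub_mod_eq_zero_iff (Nat.mod_lt k hpos) (Nat.mod_lt l hpos)]

lemma hamming_dsub_le (hb : 1 < b) (k l : ℕ) :
    hamming b (dsub b k l) ≤ hamming b k + hamming b l := by
  induction k, l using digit_induction hb with
  | zero => simp [dsub, bdigit]
  | step k l ih =>
    rw [hamming_dsub_eq_hamming_dsub_div_add hb, hamming_eq_hamming_div_add hb k,
      hamming_eq_hamming_div_add hb l]
    split_ifs <;> omega

end Digits

section Dissection

open scoped ENNReal

/-- Lebesgue measure on the unit interval `[0,1)`. -/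
noncomputable abbrev unitVolume : Measure ℝ := volume.restrict (Set.Ico 0 1)

/-- The affine map `x ↦ (a + x) / b` of `[0,1)` onto the `b`-adic interval
`[a / b, (a + 1) / b)`; it prepends the digit `a` to the `b`-adic expansion of `x`. -/
noncomputable def cell (b a : ℕ) (x : ℝ) : ℝ := (a + x) / b

variable {b : ℕ}

@[fun_prop]
lemma continuous_cell (b a : ℕ) : Continuous (cell b a) := by
  unfold cell
  fun_prop

lemma map_cell_volume (hb : b ≠ 0) (a : ℕ) :
    (volume : Measure ℝ).map (cell b a) = (b : ℝ≥0∞) • volume := by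
  have hcomp : cell b a = (· * (b : ℝ)⁻¹) ∘ ((a : ℝ) + ·) := by
    funext x
    rw [Function.comp_apply, cell, div_eq_mul_inv]
  rw [hcomp, ← Measure.map_map (by fun_prop) (by fun_prop), map_add_left_eq_self,
    Real.map_volume_mul_right (by positivity), inv_inv, Nat.abs_cast, ENNReal.ofReal_natCast]

lemma map_cell_unitVolume (hb : b ≠ 0) (a : ℕ) :
    unitVolume.map (cell b a) =
      (b : ℝ≥0∞) • volume.restrict (Set.Ico ((a : ℝ) / b) (((a + 1 : ℕ) : ℝ) / b)) := by
  have hpos : (0 : ℝ) < b := by positivity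
  have hpre : cell b a ⁻¹' Set.Ico ((a : ℝ) / b) (((a + 1 : ℕ) : ℝ) / b) = Set.Ico 0 1 := by
    ext x
    simp only [cell, Set.mem_preimage, Set.mem_Ico, div_le_div_iff_of_pos_right hpos,
      div_lt_div_iff_of_pos_right hpos, Nat.cast_succ, le_add_iff_nonneg_right,
      add_lt_add_iff_left]
  rw [unitVolume, ← hpre, ← Measure.restrict_map (continuous_cell b a).measurable
    measurableSet_Ico, map_cell_volume hb, Measure.restrict_smul]

lemma sum_restrict_Ico {X : Type*} [LinearOrder X] [TopologicalSpace X] [OrderClosedTopology X]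
    [MeasurableSpace X] [OpensMeasurableSpace X] (μ : Measure X) {u : ℕ → X} (hu : Monotone u)
    (n : ℕ) :
    ∑ a : Fin n, μ.restrict (Set.Ico (u a) (u (a + 1))) = μ.restrict (Set.Ico (u 0) (u n)) := by
  induction n with
  | zero => simp
  | succ n ih =>
    rw [Fin.sum_univ_castSucc]
    simp only [Fin.val_castSucc, Fin.val_last, ih]
    rw [← Measure.restrict_union Set.Ico_disjoint_Ico_same measurableSet_Ico,
      Set.Ico_union_Ico_eq_Ico (hu n.zero_le) (hu n.le_succ)]

lemma sum_map_cell (hb : b ≠ 0) :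
    Measure.sum (fun a : Fin b => unitVolume.map (cell b a)) = (b : ℝ≥0∞) • unitVolume := by
  have hmono : Monotone fun n : ℕ => (n : ℝ) / b := fun m n h => by dsimp only; gcongr
  have hsum := sum_restrict_Ico volume hmono b
  simp only [Nat.cast_zero, zero_div, div_self (Nat.cast_ne_zero.mpr hb : (b : ℝ) ≠ 0)] at hsum
  simp only [Measure.sum_fintype, map_cell_unitVolume hb, ← Finset.smul_sum, hsum]

lemma sum_map_cell_prod (hb : b ≠ 0) :
    Measure.sum (fun p : Fin b × Fin b =>
      (unitVolume.prod unitVolume).map (Prod.map (cell b p.1) (cell b p.2))) =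
        ((b : ℝ≥0∞) * b) • unitVolume.prod unitVolume := by
  have hcell : ∀ a, Measurable (cell b a) := fun a => (continuous_cell b a).measurable
  simp only [← Measure.map_prod_map _ _ (hcell _) (hcell _)]
  rw [← Measure.prod_sum (fun a : Fin b => unitVolume.map (cell b a))
    (fun a : Fin b => unitVolume.map (cell b a)), sum_map_cell hb, Measure.prod_smul_left,
    Measure.prod_smul_right, smul_smul]

lemma toReal_smul_integral_eq_sum_integral_comp {ι Ω E : Type*} [Fintype ι] [MeasurableSpace Ω]
    [NormedAddCommGroup E] [NormedSpace ℝ E] {μ : Measure Ω} {φ : ι → Ω → Ω} {c : ℝ≥0∞}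
    (hc : c ≠ ∞) (hφ : ∀ i, Measurable (φ i)) (hμ : Measure.sum (fun i => μ.map (φ i)) = c • μ)
    {g : Ω → E} (hg : Integrable g μ) :
    c.toReal • ∫ x, g x ∂μ = ∑ i, ∫ x, g (φ i x) ∂μ := by
  rw [Measure.sum_fintype] at hμ
  have hint : ∀ i ∈ Finset.univ, Integrable g (μ.map (φ i)) := by
    rw [← integrable_finsetSum_measure, hμ]
    exact hg.smul_measure hc
  rw [← integral_smul_measure, ← hμ, integral_finsetSum_measure hint]
  exact Finset.sum_congr rfl fun i hi =>
    integral_map (hφ i).aemeasurable (hint i hi).aestronglyMeasurable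

end Dissection

section Walsh

/-- The primitive `b`-th root of unity `ω_b = exp(2π√-1/b)`. -/
noncomputable def walshRoot (b : ℕ) : ℂ := Complex.exp (2 * Real.pi * Complex.I / b)

variable {b : ℕ}

lemma isPrimitiveRoot_walshRoot (hb : b ≠ 0) : IsPrimitiveRoot (walshRoot b) b :=
  Complex.isPrimitiveRoot_exp b hb

lemma walsh_eq_zpow (hb : 1 < b) {k N : ℕ} (h : k ≤ N) (x : ℝ) :
    walsh b k x =
      walshRoot b ^ ∑ i ∈ Finset.range N, (bdigit b k i : ℤ) * rdigit b x (i + 1) := by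
  have vanish : ∀ i ≥ k, (bdigit b k i : ℤ) * rdigit b x (i + 1) = 0 := fun i hi => by
    rw [bdigit_eq_zero_of_le hb hi, Nat.cast_zero, zero_mul]
  rw [Finset.eventually_constant_sum vanish h,
    ← Finset.eventually_constant_sum vanish k.le_succ, walshRoot, ← Complex.exp_int_mul, walsh,
    mul_comm]
  push_cast
  rfl

lemma norm_walsh (b k : ℕ) (x : ℝ) : ‖walsh b k x‖ = 1 := by
  rw [walsh, ← Complex.norm_exp_ofReal_mul_I (2 * Real.pi / b *
    ∑ a ∈ Finset.range (k + 1), (bdigit b k a : ℝ) * (rdigit b x (a + 1) : ℝ))]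
  push_cast
  ring_nf

lemma measurable_walsh (b k : ℕ) : Measurable (walsh b k) := by
  have hdigit : ∀ i, Measurable fun x => rdigit b x i := fun i =>
    (measurable_from_top (f := fun z : ℤ => z % b)).comp
      (Int.measurable_floor.comp (measurable_id.mul_const _))
  refine Complex.measurable_exp.comp (Measurable.const_mul ?_ _)
  refine Finset.measurable_sum _ fun i _ => Measurable.const_mul ?_ _
  exact (measurable_from_top (f := fun z : ℤ => (z : ℂ))).comp (hdigit _)

lemma rdigit_cell_one {a : ℕ} (ha : a < b) {x : ℝ} (hx : x ∈ Set.Ico (0 : ℝ) 1) :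
    rdigit b (cell b a x) 1 = a := by
  have hb : (b : ℝ) ≠ 0 := by norm_cast; omega
  rw [rdigit, cell, pow_one, div_mul_cancel₀ _ hb, Int.floor_natCast_add,
    Int.floor_eq_zero_iff.mpr hx, add_zero]
  exact Int.emod_eq_of_lt (by omega) (by omega)

lemma rdigit_cell_add_two (hb : b ≠ 0) (a i : ℕ) (x : ℝ) :
    rdigit b (cell b a x) (i + 2) = rdigit b x (i + 1) := by
  have hexpand : cell b a x * (b : ℝ) ^ (i + 2) =
      x * (b : ℝ) ^ (i + 1) + ((a * b ^ i * b : ℤ) : ℝ) := by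
    rw [cell]
    push_cast
    field_simp
    ring
  rw [rdigit, rdigit, hexpand, Int.floor_add_intCast, Int.add_mul_emod_self_right]

lemma walsh_cell (hb : 1 < b) (k : ℕ) {a : ℕ} (ha : a < b) {x : ℝ}
    (hx : x ∈ Set.Ico (0 : ℝ) 1) :
    walsh b k (cell b a x) = walshRoot b ^ (k % b * a) * walsh b (k / b) x := by
  have hroot : walshRoot b ≠ 0 := Complex.exp_ne_zero _
  rw [walsh_eq_zpow hb k.le_succ, walsh_eq_zpow hb (Nat.div_le_self k b),
    Finset.sum_range_succ', zpow_add₀ hroot, mul_comm, bdigit_zero, rdigit_cell_one ha hx,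
    ← Nat.cast_mul, zpow_natCast]
  simp only [bdigit_succ, add_assoc, one_add_one_eq_two, rdigit_cell_add_two (by omega : b ≠ 0)]

lemma sum_conj_pow_mul_pow_eq_zero {ζ : ℂ} (hζ : IsPrimitiveRoot ζ b) {u v : ℕ} (hu : u < b)
    (hv : v < b) (huv : u ≠ v) :
    ∑ a : Fin b, starRingEnd ℂ (ζ ^ (u * a)) * ζ ^ (v * a) = 0 := by
  have hb : b ≠ 0 := by omega
  have hconj : starRingEnd ℂ ζ = ζ⁻¹ := (Complex.inv_eq_conj (hζ.norm'_eq_one hb)).symm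
  have hterm : ∀ a : ℕ, starRingEnd ℂ (ζ ^ (u * a)) * ζ ^ (v * a) = (ζ ^ v / ζ ^ u) ^ a := by
    intro a
    rw [map_pow, hconj, inv_pow, pow_mul, pow_mul, ← inv_pow, ← mul_pow, mul_comm,
      div_eq_mul_inv]
  have hne : ζ ^ v / ζ ^ u ≠ 1 := fun h =>
    huv (hζ.pow_inj hv hu (eq_of_div_eq_one h)).symm
  have hpow : (ζ ^ v / ζ ^ u) ^ b = 1 := by
    rw [div_pow, pow_right_comm, pow_right_comm ζ u, hζ.pow_eq_one, one_pow, one_pow, div_one]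
  simp only [hterm]
  rw [Fin.sum_univ_eq_sum_range fun a => (ζ ^ v / ζ ^ u) ^ a, geom_sum_eq hne, hpow, sub_self,
    zero_div]

end Walsh

section WalshCoefficients

/-- The `k`-th Walsh coefficient `∫ f conj(wal_k)` of a univariate function. -/
noncomputable def walshCoeff (b k : ℕ) (f : ℝ → ℂ) : ℂ :=
  ∫ x, f x * starRingEnd ℂ (walsh b k x) ∂unitVolume

/-- The `(k, l)`-th Walsh coefficient of a bivariate function; as in the coefficients of the
kernel, only the Walsh function of the first variable is conjugated. -/
noncomputable def walshCoeff₂ (b k l : ℕ) (f : ℝ × ℝ → ℂ) : ℂ :=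
  ∫ z, f z * starRingEnd ℂ (walsh b k z.1) * walsh b l z.2 ∂unitVolume.prod unitVolume

variable {b : ℕ}

lemma ae_mem_unitSquare :
    ∀ᵐ z ∂unitVolume.prod unitVolume, z ∈ Set.Ico (0 : ℝ) 1 ×ˢ Set.Ico (0 : ℝ) 1 := by
  rw [Measure.prod_restrict]
  exact ae_restrict_mem (measurableSet_Ico.prod measurableSet_Ico)

lemma integrable_unitVolume_of_continuous {f : ℝ → ℂ} (hf : Continuous f) :
    Integrable f unitVolume :=
  hf.integrableOn_Icc.mono_set Set.Ico_subset_Icc_self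

lemma integrable_unitVolume_prod_of_continuous {f : ℝ × ℝ → ℂ} (hf : Continuous f) :
    Integrable f (unitVolume.prod unitVolume) := by
  rw [Measure.prod_restrict]
  exact (hf.continuousOn.integrableOn_compact (isCompact_Icc.prod isCompact_Icc)).mono_set
    (Set.prod_mono Set.Ico_subset_Icc_self Set.Ico_subset_Icc_self)

lemma integrable_mul_conj_walsh (b k : ℕ) {μ : Measure ℝ} {f : ℝ → ℂ} (hf : Integrable f μ) :
    Integrable (fun x => f x * starRingEnd ℂ (walsh b k x)) μ :=
  hf.mul_bdd (c := 1)
    (Complex.continuous_conj.measurable.comp (measurable_walsh b k)).aestronglyMeasurable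
    (Filter.Eventually.of_forall fun x => by simp [norm_walsh])

lemma integrable_mul_conj_walsh_mul_walsh (b k l : ℕ) {μ : Measure (ℝ × ℝ)} {f : ℝ × ℝ → ℂ}
    (hf : Integrable f μ) :
    Integrable (fun z => f z * starRingEnd ℂ (walsh b k z.1) * walsh b l z.2) μ := by
  have hk : Measurable fun z : ℝ × ℝ => starRingEnd ℂ (walsh b k z.1) :=
    Complex.continuous_conj.measurable.comp ((measurable_walsh b k).comp measurable_fst)
  have hl : Measurable fun z : ℝ × ℝ => walsh b l z.2 :=
    (measurable_walsh b l).comp measurable_snd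
  exact (hf.mul_bdd (c := 1) hk.aestronglyMeasurable
    (Filter.Eventually.of_forall fun z => by simp [norm_walsh])).mul_bdd (c := 1)
    hl.aestronglyMeasurable (Filter.Eventually.of_forall fun z => by simp [norm_walsh])

lemma walshCoeff_add (b k : ℕ) {f g : ℝ → ℂ} (hf : Integrable f unitVolume)
    (hg : Integrable g unitVolume) :
    walshCoeff b k (fun x => f x + g x) = walshCoeff b k f + walshCoeff b k g := by
  simp only [walshCoeff, add_mul]
  exact integral_add (integrable_mul_conj_walsh b k hf) (integrable_mul_conj_walsh b k hg)

lemma walshCoeff₂_add (b k l : ℕ) {f g : ℝ × ℝ → ℂ}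
    (hf : Integrable f (unitVolume.prod unitVolume))
    (hg : Integrable g (unitVolume.prod unitVolume)) :
    walshCoeff₂ b k l (fun z => f z + g z) = walshCoeff₂ b k l f + walshCoeff₂ b k l g := by
  simp only [walshCoeff₂, add_mul]
  exact integral_add (integrable_mul_conj_walsh_mul_walsh b k l hf)
    (integrable_mul_conj_walsh_mul_walsh b k l hg)

lemma walshCoeff₂_sum (b k l : ℕ) {ι : Type*} (t : Finset ι) {f : ι → ℝ × ℝ → ℂ}
    (hf : ∀ i ∈ t, Integrable (f i) (unitVolume.prod unitVolume)) :
    walshCoeff₂ b k l (fun z => ∑ i ∈ t, f i z) = ∑ i ∈ t, walshCoeff₂ b k l (f i) := by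
  simp only [walshCoeff₂, Finset.sum_mul]
  exact integral_finsetSum _ fun i hi => integrable_mul_conj_walsh_mul_walsh b k l (hf i hi)

lemma walshCoeff₂_const_mul (b k l : ℕ) (c : ℂ) (f : ℝ × ℝ → ℂ) :
    walshCoeff₂ b k l (fun z => c * f z) = c * walshCoeff₂ b k l f := by
  simp only [walshCoeff₂, mul_assoc, integral_const_mul]

lemma walshCoeff₂_congr (b k l : ℕ) {f g : ℝ × ℝ → ℂ}
    (h : ∀ z ∈ Set.Ico (0 : ℝ) 1 ×ˢ Set.Ico (0 : ℝ) 1, f z = g z) :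
    walshCoeff₂ b k l f = walshCoeff₂ b k l g := by
  refine integral_congr_ae ?_
  filter_upwards [ae_mem_unitSquare] with z hz
  rw [h z hz]

lemma walshCoeff₂_mul (b k l : ℕ) (f g : ℝ → ℂ) :
    walshCoeff₂ b k l (fun z => f z.1 * g z.2) =
      walshCoeff b k f * starRingEnd ℂ (walshCoeff b l fun y => starRingEnd ℂ (g y)) := by
  simp only [walshCoeff₂, walshCoeff, ← integral_conj, map_mul, Complex.conj_conj,
    ← integral_prod_mul]
  exact integral_congr_ae (Filter.Eventually.of_forall fun z => by ring)

lemma walshCoeff_eq_sum_cell (hb : 1 < b) (k : ℕ) {f : ℝ → ℂ} (hf : Integrable f unitVolume) :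
    (b : ℂ) * walshCoeff b k f = ∑ a : Fin b, starRingEnd ℂ (walshRoot b ^ (k % b * a)) *
      walshCoeff b (k / b) (fun x => f (cell b a x)) := by
  have hsplit := toReal_smul_integral_eq_sum_integral_comp (ENNReal.natCast_ne_top b)
    (fun a : Fin b => (continuous_cell b a).measurable) (sum_map_cell (by omega))
    (integrable_mul_conj_walsh b k hf)
  rw [ENNReal.toReal_natCast, Complex.real_smul, Complex.ofReal_natCast] at hsplit
  rw [walshCoeff, hsplit]
  refine Finset.sum_congr rfl fun a _ => ?_
  rw [walshCoeff, ← integral_const_mul]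
  refine setIntegral_congr_fun measurableSet_Ico fun x hx => ?_
  simp only [walsh_cell hb k a.isLt hx, map_mul]
  ring

lemma walshCoeff₂_eq_sum_cell (hb : 1 < b) (k l : ℕ) {f : ℝ × ℝ → ℂ}
    (hf : Integrable f (unitVolume.prod unitVolume)) :
    ((b : ℂ) * b) * walshCoeff₂ b k l f = ∑ a : Fin b, ∑ c : Fin b,
      starRingEnd ℂ (walshRoot b ^ (k % b * a)) * walshRoot b ^ (l % b * c) *
        walshCoeff₂ b (k / b) (l / b) (fun z => f (cell b a z.1, cell b c z.2)) := by
  have hsplit := toReal_smul_integral_eq_sum_integral_comp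
    (ENNReal.mul_ne_top (ENNReal.natCast_ne_top b) (ENNReal.natCast_ne_top b))
    (fun p : Fin b × Fin b =>
      (continuous_cell b p.1).measurable.prodMap (continuous_cell b p.2).measurable)
    (sum_map_cell_prod (by omega)) (integrable_mul_conj_walsh_mul_walsh b k l hf)
  rw [ENNReal.toReal_mul, ENNReal.toReal_natCast, Complex.real_smul, Complex.ofReal_mul,
    Complex.ofReal_natCast] at hsplit
  rw [walshCoeff₂, hsplit, Fintype.sum_prod_type]
  refine Finset.sum_congr rfl fun a _ => Finset.sum_congr rfl fun c _ => ?_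
  rw [walshCoeff₂, ← integral_const_mul]
  refine integral_congr_ae ?_
  filter_upwards [ae_mem_unitSquare] with z hz
  simp only [Prod.map_apply', walsh_cell hb k a.isLt hz.1, walsh_cell hb l c.isLt hz.2, map_mul]
  ring

end WalshCoefficients

section Polynomials

open Polynomial

variable {b : ℕ}

lemma natDegree_taylor_sub_lt {R : Type*} [CommRing R] {r : R} {p : R[X]}
    (h : taylor r p - p ≠ 0) : (taylor r p - p).natDegree < p.natDegree := by
  have hp : taylor r p ≠ 0 := by
    intro h0
    exact h (by rw [h0, taylor_injective r (h0.trans (map_zero _).symm), sub_zero])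
  rw [← natDegree_taylor p r]
  exact natDegree_lt_natDegree h
    (degree_sub_lt_left (degree_taylor p r) hp (leadingCoeff_taylor r p))

lemma eval_sub_eq_sum_hasseDeriv {R : Type*} [CommRing R] (p : R[X]) (x y : R) :
    p.eval (x - y) = ∑ i ∈ Finset.range (p.natDegree + 1),
      x ^ i * ((hasseDeriv i p).comp (-X)).eval y := by
  rw [sub_eq_add_neg, ← taylor_eval, eval_eq_sum_range, natDegree_taylor]
  simp only [taylor_coeff, eval_comp, eval_neg, eval_X, mul_comm]

lemma natDegree_comp_le_of_natDegree_le_one {R : Type*} [CommSemiring R] {p q : R[X]}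
    (hq : q.natDegree ≤ 1) : (p.comp q).natDegree ≤ p.natDegree :=
  natDegree_comp_le.trans ((Nat.mul_le_mul_left _ hq).trans_eq (mul_one _))

lemma eval_cell (p : ℂ[X]) (b a : ℕ) (x : ℝ) :
    p.eval (cell b a x : ℂ) = (taylor (a : ℂ) (p.comp (C (b : ℂ)⁻¹ * X))).eval (x : ℂ) := by
  rw [taylor_eval, eval_comp, cell]
  push_cast
  simp only [eval_mul, eval_C, eval_X]
  ring_nf

lemma walshCoeff_taylor_eq {k n : ℕ} {p : ℂ[X]} (hp : p.natDegree ≤ n)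
    (vanish : ∀ q : ℂ[X], q.natDegree < n → walshCoeff b k (fun x => q.eval (x : ℂ)) = 0)
    (r : ℂ) :
    walshCoeff b k (fun x => (taylor r p).eval (x : ℂ)) =
      walshCoeff b k (fun x => p.eval (x : ℂ)) := by
  have hint : ∀ q : ℂ[X], Integrable (fun x : ℝ => q.eval (x : ℂ)) unitVolume := fun q =>
    integrable_unitVolume_of_continuous (by fun_prop)
  have hdiff : walshCoeff b k (fun x => (taylor r p - p).eval (x : ℂ)) = 0 := by
    by_cases h : taylor r p - p = 0
    · simp [h, walshCoeff]
    · exact vanish _ ((natDegree_taylor_sub_lt h).trans_le hp)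
  have hadd := walshCoeff_add b k (hint p) (hint (taylor r p - p))
  rw [hdiff, add_zero] at hadd
  simpa only [← eval_add, add_sub_cancel] using hadd

theorem walshCoeff_polynomial_eq_zero (hb : 1 < b) {k : ℕ} {p : ℂ[X]}
    (hp : p.natDegree < hamming b k) : walshCoeff b k (fun x => p.eval (x : ℂ)) = 0 := by
  induction k using Nat.strong_induction_on generalizing p with
  | _ k ih =>
  rcases k.eq_zero_or_pos with rfl | hk
  · simp [hamming, bsupp, bdigit] at hp
  have vanish : ∀ q : ℂ[X], q.natDegree < hamming b (k / b) →
      walshCoeff b (k / b) (fun x => q.eval (x : ℂ)) = 0 := fun q => ih _ (Nat.div_lt_self hk hb)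
  have hscale : (p.comp (C (b : ℂ)⁻¹ * X)).natDegree ≤ p.natDegree :=
    natDegree_comp_le_of_natDegree_le_one (by compute_degree)
  rw [hamming_eq_hamming_div_add hb] at hp
  have hsplit := walshCoeff_eq_sum_cell hb k (f := fun x => p.eval (x : ℂ))
    (integrable_unitVolume_of_continuous (by fun_prop))
  have hcells : (b : ℂ) * walshCoeff b k (fun x => p.eval (x : ℂ)) = 0 := by
    simp only [hsplit, eval_cell]
    split_ifs at hp with hdigit
    · exact Finset.sum_eq_zero fun a _ => by
        rw [vanish _ (by rw [natDegree_taylor]; omega), mul_zero]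
    · have hchar := sum_conj_pow_mul_pow_eq_zero (isPrimitiveRoot_walshRoot (by omega : b ≠ 0))
        (Nat.mod_lt k (by omega)) (by omega : 0 < b) hdigit
      simp only [zero_mul, pow_zero, mul_one] at hchar
      simp only [walshCoeff_taylor_eq (hscale.trans (by omega)) vanish,
        ← Finset.sum_mul, hchar, zero_mul]
  exact (mul_eq_zero.mp hcells).resolve_left (by norm_cast; omega)

theorem walshCoeff₂_polynomial_mul_eq_zero (hb : 1 < b) {k l : ℕ} {p q : ℂ[X]}
    (h : p.natDegree + q.natDegree < hamming b k + hamming b l) :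
    walshCoeff₂ b k l (fun z => p.eval (z.1 : ℂ) * q.eval (z.2 : ℂ)) = 0 := by
  have hconj : ∀ y : ℝ,
      starRingEnd ℂ (q.eval (y : ℂ)) = (q.map (starRingEnd ℂ)).eval (y : ℂ) := fun y => by
    rw [← eval_map_apply, Complex.conj_ofReal]
  rw [walshCoeff₂_mul b k l (fun x => p.eval (x : ℂ)) (fun y => q.eval (y : ℂ))]
  rcases lt_or_ge p.natDegree (hamming b k) with hp | hp
  · rw [walshCoeff_polynomial_eq_zero hb hp, zero_mul]
  · have hq : (q.map (starRingEnd ℂ)).natDegree < hamming b l :=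
      natDegree_map_le.trans_lt (by omega)
    simp only [hconj, walshCoeff_polynomial_eq_zero hb hq, map_zero, mul_zero]

theorem walshCoeff₂_polynomial_sub_eq_zero (hb : 1 < b) {k l : ℕ} {p : ℂ[X]}
    (h : p.natDegree < hamming b k + hamming b l) :
    walshCoeff₂ b k l (fun z => p.eval ((z.1 : ℂ) - z.2)) = 0 := by
  simp only [eval_sub_eq_sum_hasseDeriv]
  rw [walshCoeff₂_sum b k l _ fun i _ =>
    integrable_unitVolume_prod_of_continuous (by fun_prop)]
  refine Finset.sum_eq_zero fun i hi => ?_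
  have hdeg : ((hasseDeriv i p).comp (-X)).natDegree ≤ p.natDegree - i :=
    (natDegree_comp_le_of_natDegree_le_one (by simp)).trans (natDegree_hasseDeriv_le p i)
  have hmem := Finset.mem_range.mp hi
  have hmul := walshCoeff₂_polynomial_mul_eq_zero hb (k := k) (l := l) (p := X ^ i)
    (q := (hasseDeriv i p).comp (-X)) (by rw [natDegree_X_pow]; omega)
  simpa only [eval_pow, eval_X] using hmul

end Polynomials

section Diagonal

open Polynomial

variable {b : ℕ}

lemma abs_cell_sub_cell_of_lt {a c : ℕ} (hac : a < c) {x y : ℝ} (hx : x ∈ Set.Ico (0 : ℝ) 1)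
    (hy : y ∈ Set.Ico (0 : ℝ) 1) :
    |cell b a x - cell b c y| = (b : ℝ)⁻¹ * (c - a - (x - y)) := by
  have hcast : (a : ℝ) + 1 ≤ c := by exact_mod_cast hac
  rw [cell, cell, ← sub_div, abs_div, Nat.abs_cast, abs_of_nonpos (by linarith [hx.2, hy.1])]
  ring

lemma exists_natDegree_le_eval_abs_cell_sub_cell (p : ℂ[X]) (b : ℕ) {a c : ℕ} (hac : a ≠ c) :
    ∃ q : ℂ[X], q.natDegree ≤ p.natDegree ∧
      ∀ z ∈ Set.Ico (0 : ℝ) 1 ×ˢ Set.Ico (0 : ℝ) 1,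
        p.eval ((|cell b a z.1 - cell b c z.2| : ℝ) : ℂ) = q.eval ((z.1 : ℂ) - z.2) := by
  rcases lt_or_gt_of_ne hac with h | h
  · refine ⟨p.comp (C (b : ℂ)⁻¹ * (C ((c : ℂ) - a) - X)),
      natDegree_comp_le_of_natDegree_le_one (by compute_degree), fun z hz => ?_⟩
    rw [abs_cell_sub_cell_of_lt h hz.1 hz.2]
    simp
  · refine ⟨p.comp (C (b : ℂ)⁻¹ * (C ((a : ℂ) - c) + X)),
      natDegree_comp_le_of_natDegree_le_one (by compute_degree), fun z hz => ?_⟩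
    rw [abs_sub_comm, abs_cell_sub_cell_of_lt h hz.2 hz.1]
    simp [sub_eq_add_neg, add_comm, add_left_comm]

lemma eval_abs_cell_sub_cell_self (p : ℂ[X]) (b a : ℕ) (x y : ℝ) :
    p.eval ((|cell b a x - cell b a y| : ℝ) : ℂ) =
      (p.comp (C (b : ℂ)⁻¹ * X)).eval ((|x - y| : ℝ) : ℂ) := by
  rw [cell, cell, ← sub_div, add_sub_add_left_eq_sub, abs_div, Nat.abs_cast, div_eq_inv_mul]
  simp

lemma walshCoeff₂_polynomial_abs_cell_sub_cell_eq_zero (hb : 1 < b) {k l : ℕ} {p : ℂ[X]}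
    (h : p.natDegree < hamming b k + hamming b l) {a c : ℕ} (hac : a ≠ c) :
    walshCoeff₂ b k l (fun z => p.eval ((|cell b a z.1 - cell b c z.2| : ℝ) : ℂ)) = 0 := by
  obtain ⟨q, hq, heval⟩ := exists_natDegree_le_eval_abs_cell_sub_cell p b hac
  rw [walshCoeff₂_congr b k l heval]
  exact walshCoeff₂_polynomial_sub_eq_zero hb (hq.trans_lt h)

lemma walshCoeff₂_polynomial_abs_sub_eq_diagonal (hb : 1 < b) {k l : ℕ} {p : ℂ[X]}
    (h : p.natDegree < hamming b (k / b) + hamming b (l / b)) :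
    ((b : ℂ) * b) * walshCoeff₂ b k l (fun z => p.eval ((|z.1 - z.2| : ℝ) : ℂ)) =
      (∑ a : Fin b, starRingEnd ℂ (walshRoot b ^ (k % b * a)) * walshRoot b ^ (l % b * a)) *
        walshCoeff₂ b (k / b) (l / b)
          (fun z => (p.comp (C (b : ℂ)⁻¹ * X)).eval ((|z.1 - z.2| : ℝ) : ℂ)) := by
  rw [walshCoeff₂_eq_sum_cell hb k l (integrable_unitVolume_prod_of_continuous (by fun_prop)),
    Finset.sum_mul]
  refine Finset.sum_congr rfl fun a _ => ?_
  rw [Finset.sum_eq_single a]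
  · simp only [eval_abs_cell_sub_cell_self]
  · intro c _ hca
    rw [walshCoeff₂_polynomial_abs_cell_sub_cell_eq_zero hb h fun hac => hca (Fin.ext hac.symm),
      mul_zero]
  · simp

theorem walshCoeff₂_polynomial_abs_sub_eq_zero (hb : 1 < b) {k l : ℕ} {p : ℂ[X]}
    (h : p.natDegree + 1 < hamming b (dsub b k l)) :
    walshCoeff₂ b k l (fun z => p.eval ((|z.1 - z.2| : ℝ) : ℂ)) = 0 := by
  induction k, l using digit_induction hb generalizing p with
  | zero => simp [dsub, hamming, bsupp, bdigit] at h
  | step k l ih =>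
    have htriangle := hamming_dsub_le hb (k / b) (l / b)
    rw [hamming_dsub_eq_hamming_dsub_div_add hb] at h
    have hdiag := walshCoeff₂_polynomial_abs_sub_eq_diagonal hb (k := k) (l := l) (p := p)
      (by split_ifs at h <;> omega)
    refine (mul_eq_zero.mp (hdiag.trans ?_)).resolve_left (by norm_cast; positivity)
    split_ifs at h with hdigit
    · have hscale : (p.comp (C (b : ℂ)⁻¹ * X)).natDegree ≤ p.natDegree :=
        natDegree_comp_le_of_natDegree_le_one (by compute_degree)
      rw [ih (by omega), mul_zero]
    · rw [sum_conj_pow_mul_pow_eq_zero (isPrimitiveRoot_walshRoot (by omega : b ≠ 0))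
        (Nat.mod_lt k (by omega)) (Nat.mod_lt l (by omega)) hdigit, zero_mul]

/-- An even leading power of `|x - y|` is a polynomial in `x - y`, which saves one degree. -/
theorem walshCoeff₂_polynomial_abs_sub_eq_zero_of_even (hb : 1 < b) {k l : ℕ} {p : ℂ[X]}
    (hp : Even p.natDegree) (h : p.natDegree < hamming b (dsub b k l)) :
    walshCoeff₂ b k l (fun z => p.eval ((|z.1 - z.2| : ℝ) : ℂ)) = 0 := by
  have hsplit : ∀ z : ℝ × ℝ, p.eval ((|z.1 - z.2| : ℝ) : ℂ) =
      p.eraseLead.eval ((|z.1 - z.2| : ℝ) : ℂ) +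
        (monomial p.natDegree p.leadingCoeff).eval ((z.1 : ℂ) - z.2) := fun z => by
    have heven : ((|z.1 - z.2| : ℝ) : ℂ) ^ p.natDegree = ((z.1 : ℂ) - z.2) ^ p.natDegree := by
      rw [← Complex.ofReal_pow, hp.pow_abs, Complex.ofReal_pow, Complex.ofReal_sub]
    conv_lhs => rw [← eraseLead_add_monomial_natDegree_leadingCoeff p]
    rw [eval_add, eval_monomial, eval_monomial, heven]
  have hlower : walshCoeff₂ b k l (fun z => p.eraseLead.eval ((|z.1 - z.2| : ℝ) : ℂ)) = 0 := by
    rcases p.natDegree.eq_zero_or_pos with h0 | hpos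
    · rw [eq_C_of_natDegree_eq_zero h0, eraseLead_C]
      simp [walshCoeff₂]
    · have hdeg := eraseLead_natDegree_le p
      exact walshCoeff₂_polynomial_abs_sub_eq_zero hb (by omega)
  have hlead : walshCoeff₂ b k l
      (fun z => (monomial p.natDegree p.leadingCoeff).eval ((z.1 : ℂ) - z.2)) = 0 :=
    walshCoeff₂_polynomial_sub_eq_zero hb
      ((natDegree_monomial_le _).trans_lt (h.trans_le (hamming_dsub_le hb k l)))
  simp only [hsplit]
  rw [walshCoeff₂_add b k l (integrable_unitVolume_prod_of_continuous (by fun_prop))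
    (integrable_unitVolume_prod_of_continuous (by fun_prop)), hlower, hlead, add_zero]

end Diagonal

section Kernel

open Polynomial

variable {b : ℕ}

lemma natDegree_bernoulli (r : ℕ) : (Polynomial.bernoulli r).natDegree = r := by
  refine natDegree_eq_of_le_of_coeff_ne_zero (natDegree_le_iff_coeff_eq_zero.mpr fun n hn => ?_) ?_
  · rw [coeff_bernoulli, if_neg (by omega)]
  · simp [coeff_bernoulli]

lemma ofReal_bernoulliPoly (r : ℕ) (x : ℝ) :
    (bernoulliPoly r x : ℂ) = ((Polynomial.bernoulli r).map (algebraMap ℚ ℂ)).eval (x : ℂ) := by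
  rw [bernoulliPoly, eval_map_algebraMap, ← Complex.coe_algebraMap, aeval_algebraMap_apply]

@[fun_prop]
lemma continuous_bernoulliPoly (r : ℕ) : Continuous (bernoulliPoly r) :=
  Polynomial.continuous_aeval _

lemma continuous_kker (α : ℕ) : Continuous fun z : ℝ × ℝ => Kker α z.1 z.2 := by
  unfold Kker
  fun_prop

lemma khat_eq_walshCoeff₂ (b α k l : ℕ) :
    Khat b α k l = walshCoeff₂ b k l (fun z => (Kker α z.1 z.2 : ℂ)) := by
  have hker : Integrable (fun z : ℝ × ℝ => (Kker α z.1 z.2 : ℂ)) (unitVolume.prod unitVolume) :=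
    integrable_unitVolume_prod_of_continuous (Complex.continuous_ofReal.comp (continuous_kker α))
  exact (integral_prod _ (integrable_mul_conj_walsh_mul_walsh b k l hker)).symm

lemma walshCoeff₂_bernoulliPoly_mul_eq_zero (hb : 1 < b) {k l r : ℕ}
    (h : 2 * r < hamming b k + hamming b l) :
    walshCoeff₂ b k l (fun z => (bernoulliPoly r z.1 : ℂ) * (bernoulliPoly r z.2 : ℂ)) = 0 := by
  simp only [ofReal_bernoulliPoly]
  refine walshCoeff₂_polynomial_mul_eq_zero hb ?_
  rwa [natDegree_map, natDegree_bernoulli, ← two_mul]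

lemma walshCoeff₂_bernoulliPoly_abs_sub_eq_zero (hb : 1 < b) {k l r : ℕ} (hr : Even r)
    (h : r < hamming b (dsub b k l)) :
    walshCoeff₂ b k l (fun z => (bernoulliPoly r |z.1 - z.2| : ℂ)) = 0 := by
  have hdeg : ((Polynomial.bernoulli r).map (algebraMap ℚ ℂ)).natDegree = r := by
    rw [natDegree_map, natDegree_bernoulli]
  simp only [ofReal_bernoulliPoly]
  exact walshCoeff₂_polynomial_abs_sub_eq_zero_of_even hb (by rwa [hdeg]) (by rwa [hdeg])

theorem khat_eq_zero (hb : 1 < b) {α k l : ℕ} (h : 2 * α < hamming b (dsub b k l)) :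
    Khat b α k l = 0 := by
  have hker : ∀ z : ℝ × ℝ, (Kker α z.1 z.2 : ℂ) =
      (∑ r ∈ Finset.range (α + 1), ((r.factorial : ℂ) ^ 2)⁻¹ *
          ((bernoulliPoly r z.1 : ℂ) * (bernoulliPoly r z.2 : ℂ))) +
        (-1) ^ (α + 1) / ((2 * α).factorial : ℂ) * (bernoulliPoly (2 * α) |z.1 - z.2| : ℂ) := by
    intro z
    simp only [Kker]
    push_cast
    simp only [div_eq_inv_mul, mul_assoc, mul_left_comm]
  have hprod : ∀ r ∈ Finset.range (α + 1),
      walshCoeff₂ b k l (fun z => ((r.factorial : ℂ) ^ 2)⁻¹ *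
        ((bernoulliPoly r z.1 : ℂ) * (bernoulliPoly r z.2 : ℂ))) = 0 := fun r hr => by
    have hle := hamming_dsub_le hb k l
    have hr := Finset.mem_range.mp hr
    rw [walshCoeff₂_const_mul, walshCoeff₂_bernoulliPoly_mul_eq_zero hb (by omega), mul_zero]
  rw [khat_eq_walshCoeff₂]
  simp only [hker]
  rw [walshCoeff₂_add, walshCoeff₂_sum, Finset.sum_eq_zero hprod, walshCoeff₂_const_mul,
    walshCoeff₂_bernoulliPoly_abs_sub_eq_zero hb (even_two_mul α) h, mul_zero, add_zero]
  all_goals intros; exact integrable_unitVolume_prod_of_continuous (by fun_prop)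

lemma khatS_eq_prod (b α s : ℕ) (k l : Fin s → ℕ) :
    KhatS b α s k l = ∏ j, Khat b α (k j) (l j) := by
  have hinner : ∀ x : Fin s → ℝ,
      ∫ y, ∏ j, (Kker α (x j) (y j) : ℂ) * starRingEnd ℂ (walsh b (k j) (x j)) *
          walsh b (l j) (y j) ∂Measure.pi (fun _ : Fin s => unitVolume) =
        ∏ j, ∫ y, (Kker α (x j) y : ℂ) * starRingEnd ℂ (walsh b (k j) (x j)) *
          walsh b (l j) y ∂unitVolume := fun x =>
    integral_fintype_prod_eq_prod fun j y => (Kker α (x j) y : ℂ) *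
      starRingEnd ℂ (walsh b (k j) (x j)) * walsh b (l j) y
  simp only [KhatS, Khat, walshVec, volume_pi, Measure.restrict_pi_pi, map_prod,
    Complex.ofReal_prod, ← Finset.prod_mul_distrib, hinner]
  exact integral_fintype_prod_eq_prod fun j x => ∫ y, (Kker α x y : ℂ) *
    starRingEnd ℂ (walsh b (k j) x) * walsh b (l j) y ∂unitVolume

end Kernel

theorem khatS_sparse_general (b s α : ℕ) (hb : 1 < b) (k l : Fin s → ℕ)
    (h : 2 * α * s < hammingVec b fun j => dsub b (k j) (l j)) :
    KhatS b α s k l = 0 := by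
  have hsum : ∑ _j : Fin s, 2 * α < ∑ j, hamming b (dsub b (k j) (l j)) := by
    simpa [hammingVec, mul_comm] using h
  obtain ⟨j, hj, hlarge⟩ := Finset.exists_lt_of_sum_lt hsum
  rw [khatS_eq_prod]
  exact Finset.prod_eq_zero hj (khat_eq_zero hb hlarge)

/-- Corollary 1. For a prime `b` and `s, α ∈ ℕ` with `α ≥ 2`, if
`k, l ∈ ℕ₀^s` satisfy `κ(k ⊖ l) > 2αs`, then `K̂_{α,s}(k,l) = 0`. -/
theorem khatS_sparse (b s α : ℕ) (hb : b.Prime) (hs : 0 < s) (hα : 2 ≤ α)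
    (k l : Fin s → ℕ) (h : 2 * α * s < hammingVec b fun j => dsub b (k j) (l j)) :
    KhatS b α s k l = 0 :=
  khatS_sparse_general b s α hb.one_lt k l h
end

section
/- Let b be a prime, s ∈ ℕ, and α, β ∈ ℕ with 2 ≤ α and β ≥ 2α; set A := (α−1)/(β−1) and B := (β−α)/(β−1). For every digital net P ⊂ [0,1)^s over F_b with generating matrices in F_b^{n×m}, one has ∑_{k ∈ P⊥ \ {0}} b^{−2μ_α(k)} ≤ b · (1 − b^{−(2B−1)})^{−s} · (μ_1(P) + 1)^{s−1} · b^{−2A·μ_β(P) − 2B·μ_1(P)}. -/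
/-!
Write `ρ = μ_1(P)`. The exponents `a_1 ≥ a_2 ≥ ⋯` of the nonzero digits of an integer, continued
by zeros, are nonincreasing, so `a_2, …, a_α` average at least as much as `a_2, …, a_β`. This gives
`μ_α ≥ A μ_β + B μ_1`, hence each term of the sum is at most `b^{-2A μ_β(P)} b^{-2B μ_1(k)}`, and it
remains to bound the sum of `b^{-d μ_1(k)}` over the nonzero dual net, where `d = 2B > 1`.

Given `l ∈ ℕ₀^s` with `|l| ≥ ρ`, choose `l' ≤ l` with `|l'| = ρ - 1`. Two dual vectors with
`μ_1(k_j) ≤ l_j` which agree in all digits from position `l'_j` on have a digitwise difference of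
NRT metric less than `ρ`, so they are equal; hence there are at most `b^{|l|-ρ+1}` such vectors.
With `x = b^{-(d-1)}` the sum is therefore at most `b^{1-ρ} ∑_{|l| ≥ ρ} x^{|l|}`. Every such `l` is
`u + v` with `|u| = ρ`, there are at most `(ρ+1)^{s-1}` vectors `u`, and summing over `v` gives
`(1-x)^{-s}`.
-/

open scoped BigOperators

/-- The column vector of the first `n` `b`-adic digits of `k`, as a vector over `F_b = ZMod b`. -/
def trv (b n : ℕ) (k : ℕ) : Fin n → ZMod b := fun i => (bdigit b k i.1 : ZMod b)

/-- The dual net `P⊥` of the digital net with generating matrices `C`. -/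
def dualNet (b : ℕ) {s n m : ℕ} (C : Fin s → Matrix (Fin n) (Fin m) (ZMod b)) :
    Set (Fin s → ℕ) :=
  {k | (∀ j, k j < b ^ n) ∧ ∑ j, ((C j).transpose).mulVec (trv b n (k j)) = 0}

/-- The dual net `P∞⊥` of the digital net with generating matrices `C` (no upper bound
on the components of `k`). -/
def dualNetInf (b : ℕ) {s n m : ℕ} (C : Fin s → Matrix (Fin n) (Fin m) (ZMod b)) :
    Set (Fin s → ℕ) :=
  {k | ∑ j, ((C j).transpose).mulVec (trv b n (k j)) = 0}

/-- The `h`-th point of the digital net generated by the matrices `C` over `ZMod b`: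
its `j`-th coordinate is `∑_{i=1}^n ξ_i b^{-i}` with `(ξ_1,…,ξ_n)ᵀ = C_j · (η_0,…,η_{m-1})ᵀ`,
where `η` are the `b`-adic digits of `h`. -/
noncomputable def netPoint (b : ℕ) {s n m : ℕ} (C : Fin s → Matrix (Fin n) (Fin m) (ZMod b))
    (h : ℕ) : Fin s → ℝ :=
  fun j => ∑ i : Fin n,
    (((C j).mulVec (fun v : Fin m => (bdigit b h v.1 : ZMod b)) i).val : ℝ) / (b : ℝ) ^ (i.1 + 1)

/-- Sum of the `α` largest elements of a finite set of (0-based) row indices, counted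
1-based, i.e. each index `i` contributes `i + 1`. -/
def topSum (α : ℕ) (R : Finset ℕ) : ℕ := (((R.sort (· ≤ ·)).reverse.take α).map (· + 1)).sum

/-- The digital net with generating matrices `C_1,…,C_s ∈ F_b^{n×m}` is an order `α`
digital `(t,m,s)`-net: for every choice of rows `i_{j,v_j} < ⋯ < i_{j,1}` from each `C_j`
such that the 1-based indices of the `min(α, v_j)` largest chosen rows of each matrix sum
to at most `αm - t`, the chosen rows are linearly independent over `F_b`. -/
def isOrderNet (b α t m : ℕ) {s n : ℕ} (C : Fin s → Matrix (Fin n) (Fin m) (ZMod b)) : Prop :=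
  ∀ R : Fin s → Finset (Fin n),
    (∑ j, topSum α ((R j).image Fin.val)) ≤ α * m - t →
    LinearIndependent (ZMod b) fun p : Σ j : Fin s, {i : Fin n // i ∈ R j} => C p.1 p.2.1

/-- The minimum Dick metric `μ_α(P)` of the digital net with generating matrices `C`,
namely the minimum of `μ_α(k)` over nonzero elements `k` of the dual net. -/
noncomputable def minDick (b α : ℕ) {s n m : ℕ}
    (C : Fin s → Matrix (Fin n) (Fin m) (ZMod b)) : ℕ :=
  sInf (dickVec b α '' {k | k ∈ dualNet b C ∧ k ≠ 0})

/-- The minimum Hamming metric `κ(P)` of the digital net with generating matrices `C`. -/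
noncomputable def minHamming (b : ℕ) {s n m : ℕ}
    (C : Fin s → Matrix (Fin n) (Fin m) (ZMod b)) : ℕ :=
  sInf (hammingVec b '' {k | k ∈ dualNet b C ∧ k ≠ 0})

section GeometricTail

open Finset

variable {ι : Type*}

lemma card_piAntidiag_le [DecidableEq ι] (s : Finset ι) (n : ℕ) :
    #(piAntidiag s n) ≤ (n + 1) ^ (#s - 1) := by
  rcases s.eq_empty_or_nonempty with rfl | hs
  · rw [piAntidiag_empty]
    split_ifs <;> simp
  induction hs using Finset.Nonempty.cons_induction generalizing n with
  | singleton a =>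
    refine card_le_one.2 fun f hf g hg => funext fun i => ?_
    simp only [mem_piAntidiag, sum_singleton, mem_singleton] at hf hg
    by_cases hi : i = a
    · rw [hi, hf.1, hg.1]
    · rw [not_imp_comm.1 (hf.2 i) hi, not_imp_comm.1 (hg.2 i) hi]
  | cons a s ha hs ih =>
    rw [piAntidiag_cons ha, card_disjiUnion, card_cons, Nat.add_sub_cancel]
    calc ∑ p ∈ antidiagonal n, #((piAntidiag s p.2).map _)
        ≤ ∑ p ∈ antidiagonal n, (n + 1) ^ (#s - 1) := by
          refine sum_le_sum fun p hp => ?_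
          rw [card_map]
          have snd_le : p.2 ≤ n := (Nat.le_add_left _ _).trans_eq (mem_antidiagonal.1 hp)
          exact (ih p.2).trans (by gcongr)
      _ = (n + 1) ^ #s := by
          rw [sum_const, Nat.card_antidiagonal, smul_eq_mul, ← pow_succ',
            Nat.sub_add_cancel hs.card_pos]

variable [Fintype ι]

lemma exists_le_sum_eq (l : ι → ℕ) {r : ℕ} (hr : r ≤ ∑ i, l i) :
    ∃ u ≤ l, ∑ i, u i = r := by
  obtain ⟨u, hu, hur⟩ := Finsupp.exists_le_degree_eq (Finsupp.equivFunOnFinite.symm l) r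
    (by simpa [Finsupp.degree_eq_sum] using hr)
  exact ⟨u, hu, by rw [← hur, Finsupp.degree_eq_sum]⟩

variable {x : ℝ}

lemma sum_pow_sum_le (hx0 : 0 ≤ x) (hx1 : x < 1) (S : Finset (ι → ℕ)) :
    ∑ l ∈ S, x ^ ∑ i, l i ≤ (1 - x)⁻¹ ^ Fintype.card ι := by
  classical
  let N : ι → Finset ℕ := fun i => S.image (· i)
  calc ∑ l ∈ S, x ^ ∑ i, l i
      ≤ ∑ l ∈ Fintype.piFinset N, x ^ ∑ i, l i :=
        sum_le_sum_of_subset_of_nonneg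
          (fun l hl => Fintype.mem_piFinset.2 fun i => mem_image_of_mem _ hl)
          fun _ _ _ => pow_nonneg hx0 _
    _ = ∏ i, ∑ a ∈ N i, x ^ a := by
        simp only [prod_univ_sum, prod_pow_eq_pow_sum]
    _ ≤ ∏ _i : ι, (1 - x)⁻¹ := by
        refine prod_le_prod (fun i _ => sum_nonneg fun _ _ => pow_nonneg hx0 _) fun i _ => ?_
        rw [← tsum_geometric_of_lt_one hx0 hx1]
        exact (summable_geometric_of_lt_one hx0 hx1).sum_le_tsum _ fun _ _ => pow_nonneg hx0 _
    _ = (1 - x)⁻¹ ^ Fintype.card ι := by rw [prod_const, card_univ]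

lemma sum_pow_sum_le_of_le_sum (hx0 : 0 ≤ x) (hx1 : x < 1) {r : ℕ} {S : Finset (ι → ℕ)}
    (hS : ∀ l ∈ S, r ≤ ∑ i, l i) :
    ∑ l ∈ S, x ^ ∑ i, l i ≤
      (1 - x)⁻¹ ^ Fintype.card ι * ((r : ℝ) + 1) ^ (Fintype.card ι - 1) * x ^ r := by
  classical
  choose! u hu_le hu_sum using fun (l : ι → ℕ) (hl : r ≤ ∑ i, l i) => exists_le_sum_eq l hl
  let V := S.image fun l => l - u l
  have split_injOn : Set.InjOn (fun l => (u l, l - u l)) S := fun l hl l' hl' h => by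
    obtain ⟨fst_eq, snd_eq⟩ := Prod.mk.inj h
    calc l = (l - u l) + u l := (tsub_add_cancel_of_le (hu_le l (hS l hl))).symm
      _ = (l' - u l') + u l' := by rw [snd_eq, fst_eq]
      _ = l' := tsub_add_cancel_of_le (hu_le l' (hS l' hl'))
  have split_sum : ∀ l ∈ S, ∑ i, l i = r + ∑ i, (l - u l) i := fun l hl => by
    rw [← hu_sum l (hS l hl), ← sum_add_distrib]
    exact sum_congr rfl fun i _ => (add_tsub_cancel_of_le (hu_le l (hS l hl) i)).symm
  calc ∑ l ∈ S, x ^ ∑ i, l i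
      = ∑ l ∈ S, x ^ r * x ^ ∑ i, (l - u l) i :=
        sum_congr rfl fun l hl => by rw [split_sum l hl, pow_add]
    _ = ∑ p ∈ S.image fun l => (u l, l - u l), x ^ r * x ^ ∑ i, p.2 i :=
        (sum_image (f := fun p : (ι → ℕ) × (ι → ℕ) => x ^ r * x ^ ∑ i, p.2 i) split_injOn).symm
    _ ≤ ∑ p ∈ piAntidiag univ r ×ˢ V, x ^ r * x ^ ∑ i, p.2 i := by
        refine sum_le_sum_of_subset_of_nonneg (image_subset_iff.2 fun l hl => ?_)
          fun _ _ _ => by positivity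
        exact mem_product.2 ⟨mem_piAntidiag.2 ⟨hu_sum l (hS l hl), fun i _ => mem_univ i⟩,
          mem_image_of_mem _ hl⟩
    _ = (∑ l ∈ V, x ^ ∑ i, l i) * #(piAntidiag (univ : Finset ι) r) * x ^ r := by
        simp only [sum_product, sum_const, ← mul_sum, nsmul_eq_mul]
        ring
    _ ≤ (1 - x)⁻¹ ^ Fintype.card ι * ((r : ℝ) + 1) ^ (Fintype.card ι - 1) * x ^ r := by
        have : 0 < 1 - x := sub_pos.2 hx1
        gcongr
        · exact sum_pow_sum_le hx0 hx1 V
        · exact_mod_cast card_piAntidiag_le univ r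

end GeometricTail

section Averages

open Finset

variable {M : Type*} [AddCommMonoid M] [PartialOrder M] [IsOrderedAddMonoid M] {f : ℕ → M}
  {p q : ℕ}

lemma nsmul_sum_range_le_of_antitone (hf : Antitone f) (hpq : p ≤ q) :
    p • ∑ i ∈ range q, f i ≤ q • ∑ i ∈ range p, f i := by
  induction q, hpq using Nat.le_induction with
  | base => exact le_rfl
  | succ q hpq ih =>
    have next_le : p • f q ≤ ∑ i ∈ range p, f i := by
      simpa using card_nsmul_le_sum (range p) f (f q)
        fun i hi => hf ((mem_range.1 hi).le.trans hpq)
    rw [sum_range_succ, nsmul_add, succ_nsmul]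
    exact add_le_add ih next_le

lemma nsmul_sum_range_add_nsmul_le_of_antitone (hf : Antitone f) (hpq : p ≤ q) :
    p • ∑ i ∈ range (q + 1), f i + (q - p) • f 0 ≤ q • ∑ i ∈ range (p + 1), f i := by
  have tail_le := nsmul_sum_range_le_of_antitone (fun i j hij => hf (Nat.succ_le_succ hij)) hpq
  calc p • ∑ i ∈ range (q + 1), f i + (q - p) • f 0
      = p • ∑ i ∈ range q, f (i + 1) + q • f 0 := by
        rw [sum_range_succ', nsmul_add, add_assoc, ← add_nsmul, Nat.add_sub_cancel' hpq]
    _ ≤ q • ∑ i ∈ range p, f (i + 1) + q • f 0 := by gcongr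
    _ = q • ∑ i ∈ range (p + 1), f i := by rw [← nsmul_add, ← sum_range_succ']

end Averages

section Lists

lemma sum_take_eq_sum_range_getD {M : Type*} [AddCommMonoid M] (l : List M) (p : ℕ) :
    (l.take p).sum = ∑ i ∈ Finset.range p, l.getD i 0 := by
  induction p generalizing l with
  | zero => simp
  | succ p ih =>
    cases l with
    | nil => simp
    | cons a t =>
      rw [Finset.sum_range_succ', List.take_succ_cons, List.sum_cons, ih, add_comm]
      rfl

lemma antitone_getD_of_pairwise_ge {l : List ℕ} (hl : l.Pairwise (· ≥ ·)) :
    Antitone fun i => l.getD i 0 := by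
  intro i j hij
  rcases hij.eq_or_lt with rfl | hlt
  · exact le_rfl
  by_cases hj : j < l.length
  · simpa [hj, hlt.trans hj] using List.pairwise_iff_getElem.1 hl i j (hlt.trans hj) hj hlt
  · simp [not_lt.1 hj]

end Lists

section DigitExponents

/-- The exponents `a_1 ≥ a_2 ≥ ⋯` of the nonzero digits of `k`, as the sequence
`i ↦ a_{i+1}` continued by zeros, so that `μ_α(k)` is the sum of its first `α` terms. -/
def digitExponent (b k i : ℕ) : ℕ := (((bsupp b k).sort (· ≤ ·)).reverse.map (· + 1)).getD i 0

lemma antitone_digitExponent (b k : ℕ) : Antitone (digitExponent b k) :=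
  antitone_getD_of_pairwise_ge <| List.pairwise_map.2 <| List.pairwise_reverse.2 <|
    (Finset.pairwise_sort _ _).imp Nat.succ_le_succ

lemma dick_eq_sum_digitExponent (b α k : ℕ) :
    dick b α k = ∑ i ∈ Finset.range α, digitExponent b k i := by
  rw [dick, List.map_take, sum_take_eq_sum_range_getD]
  rfl

lemma dick_one_eq_digitExponent_zero (b k : ℕ) : dick b 1 k = digitExponent b k 0 := by
  rw [dick_eq_sum_digitExponent, Finset.sum_range_one]

lemma digitExponent_zero_le_iff {b k l : ℕ} :
    digitExponent b k 0 ≤ l ↔ ∀ i ∈ bsupp b k, i < l := by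
  constructor
  · intro h i hi
    obtain ⟨p, hp, hpi⟩ := List.getElem_of_mem
      (show i + 1 ∈ ((bsupp b k).sort (· ≤ ·)).reverse.map (· + 1) by simpa using hi)
    have eq_succ : digitExponent b k p = i + 1 := by
      rw [digitExponent, List.getD_eq_getElem _ _ hp, hpi]
    have le_zeroth : digitExponent b k p ≤ digitExponent b k 0 :=
      antitone_digitExponent b k p.zero_le
    lia
  · intro h
    rw [digitExponent]
    rcases hL : ((bsupp b k).sort (· ≤ ·)).reverse with _ | ⟨a, t⟩
    · simp
    · have ha : a ∈ ((bsupp b k).sort (· ≤ ·)).reverse := hL ▸ List.mem_cons_self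
      simpa using h a (by simpa using ha)

lemma dick_interpolation {α β : ℕ} (hα : 1 ≤ α) (hαβ : α ≤ β) (b k : ℕ) :
    (α - 1) * dick b β k + (β - α) * dick b 1 k ≤ (β - 1) * dick b α k := by
  obtain ⟨p, rfl⟩ := Nat.exists_eq_add_of_le' hα
  obtain ⟨q, rfl⟩ := Nat.exists_eq_add_of_le' (hα.trans hαβ)
  simpa [dick_eq_sum_digitExponent] using nsmul_sum_range_add_nsmul_le_of_antitone
    (antitone_digitExponent b k) (Nat.le_of_succ_le_succ hαβ)

lemma dickVec_interpolation {α β : ℕ} (hα : 1 ≤ α) (hαβ : α ≤ β) (b : ℕ) {s : ℕ}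
    (k : Fin s → ℕ) :
    (α - 1) * dickVec b β k + (β - α) * dickVec b 1 k ≤ (β - 1) * dickVec b α k := by
  simp only [dickVec, Finset.mul_sum, ← Finset.sum_add_distrib]
  exact Finset.sum_le_sum fun j _ => dick_interpolation hα hαβ b (k j)

lemma dickVec_ge_interpolation {α β : ℕ} (hα : 1 ≤ α) (hαβ : α ≤ β) (hβ : 1 < β) (b : ℕ) {s : ℕ}
    (k : Fin s → ℕ) :
    ((α : ℝ) - 1) / (β - 1) * dickVec b β k + ((β : ℝ) - α) / (β - 1) * dickVec b 1 k ≤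
      dickVec b α k := by
  have hβ1 : (0 : ℝ) < β - 1 := sub_pos.2 (mod_cast hβ)
  have h : (((α - 1) * dickVec b β k + (β - α) * dickVec b 1 k : ℕ) : ℝ) ≤
      ((β - 1) * dickVec b α k : ℕ) := mod_cast dickVec_interpolation hα hαβ b k
  push_cast [hα, hαβ, hβ.le] at h
  rw [div_mul_eq_mul_div, div_mul_eq_mul_div, ← add_div, div_le_iff₀ hβ1]
  linarith

end DigitExponents

section Digits

variable {b : ℕ}

lemma bdigit_eq_zero_of_lt {k i : ℕ} (h : k < b ^ i) : bdigit b k i = 0 := by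
  simp [bdigit, Nat.div_eq_of_lt h]

lemma bdigit_eq_of_div_eq {k k' l i : ℕ} (h : k / b ^ l = k' / b ^ l) (hi : l ≤ i) :
    bdigit b k i = bdigit b k' i := by
  obtain ⟨c, rfl⟩ := Nat.exists_eq_add_of_le hi
  simp only [bdigit, pow_add, ← Nat.div_div_eq_div_mul, h]

lemma trv_zero (b n : ℕ) : trv b n 0 = 0 := by
  funext i
  simp [trv, bdigit]

lemma lt_pow_iff_forall_bdigit_eq_zero (hb : 1 < b) {k l : ℕ} :
    k < b ^ l ↔ ∀ i, l ≤ i → bdigit b k i = 0 := by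
  refine ⟨fun h i hi => bdigit_eq_zero_of_lt (h.trans_le (Nat.pow_le_pow_right hb.le hi)),
    fun h => ?_⟩
  by_contra! hk
  have hk0 : k ≠ 0 := (hk.trans_lt' (pow_pos hb.pos l)).ne'
  have leading_lt : k / b ^ Nat.log b k < b :=
    Nat.div_lt_of_lt_mul (pow_succ b _ ▸ Nat.lt_pow_succ_log_self hb k)
  have leading_pos : 0 < k / b ^ Nat.log b k :=
    Nat.div_pos (Nat.pow_log_le_self b hk0) (pow_pos hb.pos _)
  have leading_eq_zero := h _ (Nat.le_log_of_pow_le hb hk)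
  rw [bdigit, Nat.mod_eq_of_lt leading_lt] at leading_eq_zero
  exact leading_pos.ne' leading_eq_zero

lemma mem_bsupp (hb : 1 < b) {k i : ℕ} : i ∈ bsupp b k ↔ bdigit b k i ≠ 0 := by
  simp only [bsupp, Finset.mem_filter, Finset.mem_range, and_iff_right_iff_imp]
  contrapose!
  exact fun h => bdigit_eq_zero_of_lt
    ((Nat.lt_pow_self hb).trans_le (Nat.pow_le_pow_right hb.le (by lia)))

lemma dick_one_le_iff (hb : 1 < b) {k l : ℕ} : dick b 1 k ≤ l ↔ k < b ^ l := by
  rw [dick_one_eq_digitExponent_zero, digitExponent_zero_le_iff,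
    lt_pow_iff_forall_bdigit_eq_zero hb]
  refine forall_congr' fun i => ?_
  rw [mem_bsupp hb, ← not_le]
  exact not_imp_not

lemma dickVec_one_eq_zero_iff (hb : 1 < b) {s : ℕ} {k : Fin s → ℕ} :
    dickVec b 1 k = 0 ↔ k = 0 := by
  simp only [dickVec, Finset.sum_eq_zero_iff, Finset.mem_univ, true_imp_iff, funext_iff,
    Pi.zero_apply]
  refine forall_congr' fun j => ?_
  rw [← Nat.le_zero, dick_one_le_iff hb, pow_zero, Nat.lt_one_iff]

lemma trv_apply_eq_zero_iff (hb : 0 < b) {n k : ℕ} {i : Fin n} :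
    trv b n k i = 0 ↔ bdigit b k i = 0 := by
  rw [trv, ZMod.natCast_eq_zero_iff]
  exact ⟨fun h => Nat.eq_zero_of_dvd_of_lt h (Nat.mod_lt _ hb),
    fun h => h ▸ dvd_zero b⟩

lemma lt_pow_of_trv_apply_eq_zero (hb : 1 < b) {n k l : ℕ} (hk : k < b ^ n)
    (h : ∀ i : Fin n, l ≤ i → trv b n k i = 0) : k < b ^ l := by
  refine (lt_pow_iff_forall_bdigit_eq_zero hb).2 fun i hi => ?_
  rcases lt_or_ge i n with hin | hin
  · exact (trv_apply_eq_zero_iff hb.pos).1 (h ⟨i, hin⟩ hi)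
  · exact (lt_pow_iff_forall_bdigit_eq_zero hb).1 hk i hin

lemma exists_trv_eq (hb : 0 < b) {n : ℕ} (d : Fin n → ZMod b) : ∃ k < b ^ n, trv b n k = d := by
  have : NeZero b := ⟨hb.ne'⟩
  let e : Fin n → Fin b := fun i => ⟨(d i).val, ZMod.val_lt (d i)⟩
  refine ⟨finFunctionFinEquiv e, (finFunctionFinEquiv e).2, funext fun i => ?_⟩
  have digit_eq : bdigit b (finFunctionFinEquiv e) i = (d i).val :=
    congrArg Fin.val (congrFun (finFunctionFinEquiv.symm_apply_apply e) i)
  rw [trv, digit_eq, ZMod.natCast_zmod_val]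

lemma trv_injOn (b n : ℕ) : Set.InjOn (trv b n) (Set.Iio (b ^ n)) := by
  intro k hk k' hk' h
  have digits_eq : finFunctionFinEquiv.symm (⟨k, hk⟩ : Fin (b ^ n)) =
      finFunctionFinEquiv.symm ⟨k', hk'⟩ := by
    funext i
    refine Fin.ext (Nat.ModEq.eq_of_lt_of_lt ((ZMod.natCast_eq_natCast_iff _ _ b).1 ?_)
      (Fin.is_lt _) (Fin.is_lt _))
    exact congrFun h i
  exact congrArg Fin.val (finFunctionFinEquiv.symm.injective digits_eq)

end Digits

section DualNet

open Finset

variable {b s n m : ℕ} {C : Fin s → Matrix (Fin n) (Fin m) (ZMod b)}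

open Classical in
/-- The index set `P⊥ \ {0}` of the sum to be bounded, as a finite set. -/
noncomputable def nonzeroDualNet (C : Fin s → Matrix (Fin n) (Fin m) (ZMod b)) :
    Finset (Fin s → ℕ) :=
  {k ∈ Fintype.piFinset fun _ => range (b ^ n) | k ∈ dualNet b C ∧ k ≠ 0}

lemma mem_nonzeroDualNet {k : Fin s → ℕ} : k ∈ nonzeroDualNet C ↔ k ∈ dualNet b C ∧ k ≠ 0 := by
  simp only [nonzeroDualNet, mem_filter, and_iff_right_iff_imp]
  exact fun h => Fintype.mem_piFinset.2 fun j => mem_range.2 (h.1.1 j)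

lemma minDick_le {γ : ℕ} {k : Fin s → ℕ} (hk : k ∈ nonzeroDualNet C) :
    minDick b γ C ≤ dickVec b γ k :=
  Nat.sInf_le ⟨k, mem_nonzeroDualNet.1 hk, rfl⟩

lemma tsum_eq_sum_nonzeroDualNet (f : (Fin s → ℕ) → ℝ) :
    ∑' k : {k : Fin s → ℕ // k ∈ dualNet b C ∧ k ≠ 0}, f k = ∑ k ∈ nonzeroDualNet C, f k := by
  rw [← Finset.tsum_subtype]
  exact (Equiv.tsum_eq (Equiv.subtypeEquivRight fun _ => mem_nonzeroDualNet)
    fun k : {k // k ∈ dualNet b C ∧ k ≠ 0} => f k).symm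

lemma minDick_one_pos (hb : 1 < b) (hC : (nonzeroDualNet C).Nonempty) : 0 < minDick b 1 C := by
  obtain ⟨k₀, hk₀⟩ := hC
  obtain ⟨k, hk, hk_min⟩ := Nat.sInf_mem (s := dickVec b 1 '' {k | k ∈ dualNet b C ∧ k ≠ 0})
    ⟨_, k₀, mem_nonzeroDualNet.1 hk₀, rfl⟩
  rw [minDick, ← hk_min]
  exact Nat.pos_of_ne_zero fun h => hk.2 ((dickVec_one_eq_zero_iff hb).1 h)

lemma exists_mem_dualNet_trv_eq_sub (hb : 0 < b) {k k' : Fin s → ℕ} (hk : k ∈ dualNet b C)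
    (hk' : k' ∈ dualNet b C) :
    ∃ d ∈ dualNet b C, ∀ j, trv b n (d j) = trv b n (k j) - trv b n (k' j) := by
  choose d hd_lt hd using fun j => exists_trv_eq hb (trv b n (k j) - trv b n (k' j))
  refine ⟨d, ⟨hd_lt, ?_⟩, hd⟩
  simp only [hd, Matrix.mulVec_sub, sum_sub_distrib, hk.2, hk'.2, sub_zero]

lemma eq_of_mem_dualNet_of_div_eq (hb : 1 < b) {l : Fin s → ℕ} (hl : ∑ j, l j < minDick b 1 C)
    {k k' : Fin s → ℕ} (hk : k ∈ dualNet b C) (hk' : k' ∈ dualNet b C)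
    (h : ∀ j, k j / b ^ l j = k' j / b ^ l j) : k = k' := by
  obtain ⟨d, hd, hd_sub⟩ := exists_mem_dualNet_trv_eq_sub hb.pos hk hk'
  have dick_le : ∀ j, dick b 1 (d j) ≤ l j := fun j =>
    (dick_one_le_iff hb).2 <| lt_pow_of_trv_apply_eq_zero hb (hd.1 j) fun i hi => by
      rw [hd_sub, Pi.sub_apply, trv, trv, bdigit_eq_of_div_eq (h j) hi, sub_self]
  have d_eq_zero : d = 0 := by
    by_contra hd0
    exact hl.not_ge
      ((minDick_le (mem_nonzeroDualNet.2 ⟨hd, hd0⟩)).trans (sum_le_sum fun j _ => dick_le j))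
  refine funext fun j => trv_injOn b n (hk.1 j) (hk'.1 j) (sub_eq_zero.1 ?_)
  rw [← hd_sub, d_eq_zero, Pi.zero_apply, trv_zero]

lemma card_le_of_subset_dualNet_of_lt_pow (hb : 1 < b) {r : ℕ} (hr : r < minDick b 1 C)
    {l : Fin s → ℕ} (hrl : r ≤ ∑ j, l j) {D : Finset (Fin s → ℕ)} (hD : ↑D ⊆ dualNet b C)
    (hDl : ∀ k ∈ D, ∀ j, k j < b ^ l j) : #D ≤ b ^ (∑ j, l j - r) := by
  obtain ⟨u, hul, hur⟩ := exists_le_sum_eq l hrl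
  calc #D ≤ #(Fintype.piFinset fun j => range (b ^ (l j - u j))) := by
        refine card_le_card_of_injOn (fun k j => k j / b ^ u j) (fun k hk => ?_)
          fun k hk k' hk' h =>
            eq_of_mem_dualNet_of_div_eq hb (hur ▸ hr) (hD hk) (hD hk') (congrFun h)
        refine Fintype.mem_piFinset.2 fun j => mem_range.2 (Nat.div_lt_of_lt_mul ?_)
        rw [← pow_add, Nat.add_sub_cancel' (hul j)]
        exact hDl k hk j
    _ = b ^ (∑ j, l j - r) := by
        simp only [Fintype.card_piFinset, card_range]
        rw [prod_pow_eq_pow_sum, sum_tsub_distrib _ fun j _ => hul j, hur]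

lemma minDick_interpolation {α β : ℕ} (hα : 1 ≤ α) (hαβ : α ≤ β) (hβ : 1 < β) {k : Fin s → ℕ}
    (hk : k ∈ nonzeroDualNet C) :
    ((α : ℝ) - 1) / (β - 1) * minDick b β C + ((β : ℝ) - α) / (β - 1) * dickVec b 1 k ≤
      dickVec b α k := by
  have hβ1 : (0 : ℝ) ≤ β - 1 := sub_nonneg.2 (mod_cast hβ.le)
  have hα1 : (0 : ℝ) ≤ α - 1 := sub_nonneg.2 (mod_cast hα)
  refine (dickVec_ge_interpolation hα hαβ hβ b k).trans' ?_
  gcongr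
  exact minDick_le hk

/-- The vector of the NRT metrics of the coordinates of `k`; its total is `μ_1(k)`. -/
def nrtVec (b : ℕ) (k : Fin s → ℕ) : Fin s → ℕ := fun j => dick b 1 (k j)

lemma card_filter_nrtVec_eq_le (hb : 1 < b) (l : Fin s → ℕ) :
    (#{k ∈ nonzeroDualNet C | nrtVec b k = l} : ℝ) ≤
      (b : ℝ) ^ ((∑ j, l j : ℕ) + 1 - minDick b 1 C : ℝ) := by
  rcases eq_empty_or_nonempty {k ∈ nonzeroDualNet C | nrtVec b k = l} with h | ⟨k, hk⟩
  · rw [h, card_empty, Nat.cast_zero]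
    positivity
  obtain ⟨hkC, hkl⟩ := mem_filter.1 hk
  have min_pos : 0 < minDick b 1 C := minDick_one_pos hb ⟨k, hkC⟩
  have min_le : minDick b 1 C ≤ ∑ j, l j := hkl ▸ minDick_le hkC
  have card_le : #{k ∈ nonzeroDualNet C | nrtVec b k = l} ≤
      b ^ (∑ j, l j - (minDick b 1 C - 1)) := by
    refine card_le_of_subset_dualNet_of_lt_pow hb (by lia) (by lia)
      (fun k hk => (mem_nonzeroDualNet.1 (mem_filter.1 hk).1).1) fun k hk j => ?_
    exact (dick_one_le_iff hb).1 (congrFun (mem_filter.1 hk).2 j).le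
  calc (#{k ∈ nonzeroDualNet C | nrtVec b k = l} : ℝ)
      ≤ (b : ℝ) ^ (∑ j, l j + 1 - minDick b 1 C) := by
        rw [show ∑ j, l j + 1 - minDick b 1 C = ∑ j, l j - (minDick b 1 C - 1) by lia]
        exact_mod_cast card_le
    _ = (b : ℝ) ^ ((∑ j, l j : ℕ) + 1 - minDick b 1 C : ℝ) := by
        rw [← Real.rpow_natCast, Nat.cast_sub (by lia), Nat.cast_add_one]

lemma sum_rpow_dickVec_one_le_sum_image (hb : 1 < b) (d : ℝ) :
    ∑ k ∈ nonzeroDualNet C, (b : ℝ) ^ (-(d * dickVec b 1 k)) ≤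
      (b : ℝ) ^ (1 - minDick b 1 C : ℝ) *
        ∑ l ∈ (nonzeroDualNet C).image (nrtVec b), ((b : ℝ) ^ (-(d - 1))) ^ ∑ j, l j := by
  have hb0 : (0 : ℝ) < b := mod_cast hb.pos
  calc ∑ k ∈ nonzeroDualNet C, (b : ℝ) ^ (-(d * dickVec b 1 k))
      = ∑ l ∈ (nonzeroDualNet C).image (nrtVec b),
          #{k ∈ nonzeroDualNet C | nrtVec b k = l} • (b : ℝ) ^ (-(d * (∑ j, l j : ℕ))) :=
        sum_comp (fun l : Fin s → ℕ => (b : ℝ) ^ (-(d * (∑ j, l j : ℕ)))) (nrtVec b)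
    _ ≤ ∑ l ∈ (nonzeroDualNet C).image (nrtVec b),
          (b : ℝ) ^ ((∑ j, l j : ℕ) + 1 - minDick b 1 C : ℝ) *
            (b : ℝ) ^ (-(d * (∑ j, l j : ℕ))) := by
        simp only [nsmul_eq_mul]
        gcongr with l
        exact card_filter_nrtVec_eq_le hb l
    _ = (b : ℝ) ^ (1 - minDick b 1 C : ℝ) *
          ∑ l ∈ (nonzeroDualNet C).image (nrtVec b), ((b : ℝ) ^ (-(d - 1))) ^ ∑ j, l j := by
        simp only [mul_sum, ← Real.rpow_mul_natCast hb0.le, ← Real.rpow_add hb0]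
        exact sum_congr rfl fun l _ => by ring_nf

lemma sum_rpow_dickVec_one_le (hb : 1 < b) (C : Fin s → Matrix (Fin n) (Fin m) (ZMod b)) {d : ℝ}
    (hd : 1 < d) :
    ∑ k ∈ nonzeroDualNet C, (b : ℝ) ^ (-(d * dickVec b 1 k)) ≤
      b * (1 - (b : ℝ) ^ (-(d - 1)))⁻¹ ^ s * ((minDick b 1 C : ℝ) + 1) ^ (s - 1) *
        (b : ℝ) ^ (-(d * minDick b 1 C)) := by
  have hb1 : (1 : ℝ) < b := mod_cast hb
  have hb0 : (0 : ℝ) < b := zero_lt_one.trans hb1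
  set ρ := minDick b 1 C
  set x : ℝ := (b : ℝ) ^ (-(d - 1)) with hx
  have hx0 : 0 ≤ x := by positivity
  have hx1 : x < 1 := Real.rpow_lt_one_of_one_lt_of_neg hb1 (by linarith)
  have le_total : ∀ l ∈ (nonzeroDualNet C).image (nrtVec b), ρ ≤ ∑ j, l j :=
    forall_mem_image.2 fun k hk => minDick_le hk
  have power_eq : (b : ℝ) ^ (1 - ρ : ℝ) * x ^ ρ = b * (b : ℝ) ^ (-(d * ρ)) := by
    calc (b : ℝ) ^ (1 - ρ : ℝ) * x ^ ρ = (b : ℝ) ^ (1 + -(d * ρ)) := by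
          rw [hx, ← Real.rpow_mul_natCast hb0.le, ← Real.rpow_add hb0]
          ring_nf
      _ = b * (b : ℝ) ^ (-(d * ρ)) := by rw [Real.rpow_add hb0, Real.rpow_one]
  calc ∑ k ∈ nonzeroDualNet C, (b : ℝ) ^ (-(d * dickVec b 1 k))
      ≤ (b : ℝ) ^ (1 - ρ : ℝ) * ∑ l ∈ (nonzeroDualNet C).image (nrtVec b), x ^ ∑ j, l j :=
        sum_rpow_dickVec_one_le_sum_image hb d
    _ ≤ (b : ℝ) ^ (1 - ρ : ℝ) * ((1 - x)⁻¹ ^ s * ((ρ : ℝ) + 1) ^ (s - 1) * x ^ ρ) := by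
        gcongr
        simpa only [Fintype.card_fin] using sum_pow_sum_le_of_le_sum hx0 hx1 le_total
    _ = ((b : ℝ) ^ (1 - ρ : ℝ) * x ^ ρ) * ((1 - x)⁻¹ ^ s * ((ρ : ℝ) + 1) ^ (s - 1)) := by ring
    _ = b * (1 - x)⁻¹ ^ s * ((ρ : ℝ) + 1) ^ (s - 1) * (b : ℝ) ^ (-(d * ρ)) := by
        rw [power_eq]
        ring

end DualNet

theorem dual_sum_bound_general {b s n m α β : ℕ} (hb : 1 < b) (hα : 1 ≤ α) (hαβ : α ≤ β)
    {c : ℝ} (hc : 1 < c * (((β : ℝ) - α) / (β - 1)))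
    (C : Fin s → Matrix (Fin n) (Fin m) (ZMod b)) :
    (∑' k : {k : Fin s → ℕ // k ∈ dualNet b C ∧ k ≠ 0}, (b : ℝ) ^ (-(c * dickVec b α k.1))) ≤
      b * (1 - (b : ℝ) ^ (-(c * (((β : ℝ) - α) / (β - 1)) - 1)))⁻¹ ^ s *
        ((minDick b 1 C : ℝ) + 1) ^ (s - 1) *
        (b : ℝ) ^ (-(c * (((α : ℝ) - 1) / (β - 1)) * minDick b β C)
          - c * (((β : ℝ) - α) / (β - 1)) * minDick b 1 C) := by
  have hb1 : (1 : ℝ) < b := mod_cast hb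
  have hb0 : (0 : ℝ) < b := zero_lt_one.trans hb1
  have hβ : 1 < β := (hα.trans hαβ).lt_of_ne' fun h => by
    rw [h, Nat.cast_one, sub_self, div_zero, mul_zero] at hc
    exact zero_lt_one.not_gt hc
  have hβ1 : (0 : ℝ) < β - 1 := sub_pos.2 (mod_cast hβ)
  have hB : 0 ≤ ((β : ℝ) - α) / (β - 1) := div_nonneg (sub_nonneg.2 (mod_cast hαβ)) hβ1.le
  have interpolation := fun k => minDick_interpolation (C := C) hα hαβ hβ (k := k)
  set A : ℝ := ((α : ℝ) - 1) / (β - 1)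
  set B : ℝ := ((β : ℝ) - α) / (β - 1)
  have hc0 : 0 ≤ c := (pos_of_mul_pos_left (zero_lt_one.trans hc) hB).le
  calc ∑' k : {k : Fin s → ℕ // k ∈ dualNet b C ∧ k ≠ 0}, (b : ℝ) ^ (-(c * dickVec b α k.1))
      = ∑ k ∈ nonzeroDualNet C, (b : ℝ) ^ (-(c * dickVec b α k)) :=
        tsum_eq_sum_nonzeroDualNet fun k => (b : ℝ) ^ (-(c * dickVec b α k))
    _ ≤ ∑ k ∈ nonzeroDualNet C,
          (b : ℝ) ^ (-(c * A * minDick b β C)) * (b : ℝ) ^ (-(c * B * dickVec b 1 k)) := by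
        refine Finset.sum_le_sum fun k hk => ?_
        rw [← Real.rpow_add hb0]
        refine Real.rpow_le_rpow_of_exponent_le hb1.le ?_
        linarith [mul_le_mul_of_nonneg_left (interpolation k hk) hc0]
    _ ≤ (b : ℝ) ^ (-(c * A * minDick b β C)) * (b * (1 - (b : ℝ) ^ (-(c * B - 1)))⁻¹ ^ s *
          ((minDick b 1 C : ℝ) + 1) ^ (s - 1) * (b : ℝ) ^ (-(c * B * minDick b 1 C))) := by
        rw [← Finset.mul_sum]
        gcongr
        exact sum_rpow_dickVec_one_le hb C hc
    _ = b * (1 - (b : ℝ) ^ (-(c * B - 1)))⁻¹ ^ s * ((minDick b 1 C : ℝ) + 1) ^ (s - 1) *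
          (b : ℝ) ^ (-(c * A * minDick b β C) - c * B * minDick b 1 C) := by
        rw [sub_eq_add_neg (-(c * A * _)), Real.rpow_add hb0]
        ring

/-- For a prime `b` and `2 ≤ α`, `β ≥ 2α`, with `A = (α-1)/(β-1)` and
`B = (β-α)/(β-1)`, every digital net `P` over `F_b` satisfies
`∑_{k ∈ P⊥\{0}} b^{-2μ_α(k)} ≤ b (1 - b^{-(2B-1)})^{-s} (μ_1(P)+1)^{s-1} b^{-2A μ_β(P) - 2B μ_1(P)}`. -/
theorem dual_sum_bound (b s n m α β : ℕ) (hb : b.Prime) (hs : 0 < s)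
    (hα : 2 ≤ α) (hβ : 2 * α ≤ β)
    (C : Fin s → Matrix (Fin n) (Fin m) (ZMod b)) :
    (∑' k : {k : Fin s → ℕ // k ∈ dualNet b C ∧ k ≠ 0},
        (b : ℝ) ^ (-(2 * (dickVec b α k.1 : ℝ)))) ≤
      (b : ℝ) * ((1 - (b : ℝ) ^ (-(2 * (((β : ℝ) - α) / ((β : ℝ) - 1)) - 1)))⁻¹) ^ s *
        ((minDick b 1 C : ℝ) + 1) ^ (s - 1) *
        (b : ℝ) ^ (-(2 * (((α : ℝ) - 1) / ((β : ℝ) - 1)) * (minDick b β C : ℝ))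
          - 2 * (((β : ℝ) - α) / ((β : ℝ) - 1)) * (minDick b 1 C : ℝ)) := by
  have hβ1 : (0 : ℝ) < β - 1 := sub_pos.2 (mod_cast (by lia : 1 < β))
  have hαβ : 2 * (α : ℝ) ≤ β := mod_cast hβ
  have hB : 1 < 2 * (((β : ℝ) - α) / (β - 1)) := by
    rw [← mul_div_assoc, one_lt_div hβ1]
    linarith
  exact dual_sum_bound_general hb.one_lt (by lia) (by lia) hB C
end
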